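/- Let M be a complete pointed metric space such that for every compact K ⊂ M containing 0 there exists a bounded linear extension operator E : Lip_0(K) → Lip_0(M) with E(f) restricted to K equal to f for all f ∈ Lip_0(K). Then property (V*) is compactly determined for F(M): if F(K∪{0}) has property (V*) for every compact K ⊂ M, then F(M) has property (V*). -/

import Mathlib

open Filter Topology Metric Set

noncomputable section

/-- A formal series `∑ yₙ` in a normed space `Y` is weakly unconditionally Cauchy (WUC)
if `∑ |⟨φ, yₙ⟩| < ∞` for every continuous linear functional `φ` on `Y`. -/
def IsWUC {Y : Type*} [SeminormedAddCommGroup Y] [NormedSpace ℝ Y] (y : ℕ → Y) : Prop :=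
  ∀ φ : Y →L[ℝ] ℝ, Summable fun n => |φ (y n)|

/-- `Γ` is a (V*)-set in `X`: for every WUC series `∑ fₙ` in the dual `X*`,
`sup_{x ∈ Γ} |⟨x, fₙ⟩| → 0`. -/
def IsVStarSet {X : Type*} [SeminormedAddCommGroup X] [NormedSpace ℝ X] (Γ : Set X) : Prop :=
  ∀ f : ℕ → (X →L[ℝ] ℝ), IsWUC f →
    ∀ ε > (0 : ℝ), ∀ᶠ n in atTop, ∀ x ∈ Γ, |f n x| ≤ ε

/-- `Γ` is relatively weakly compact: its closure in the weak topology is compact. -/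
def RelWeaklyCompact {X : Type*} [SeminormedAddCommGroup X] [NormedSpace ℝ X]
    (Γ : Set X) : Prop :=
  IsCompact (closure ((toWeakSpace ℝ X) '' Γ))

/-- A normed space has Pełczyński's property (V*) if every (V*)-set is relatively
weakly compact. -/
def HasPropertyVStar (X : Type*) [SeminormedAddCommGroup X] [NormedSpace ℝ X] : Prop :=
  ∀ Γ : Set X, IsVStarSet Γ → RelWeaklyCompact Γ

/-- `F`, together with the map `δ : M → F`, is (a realization of) the Lipschitz-free space
over the pointed metric space `(M, o)`: `δ` is a base-point-preserving isometric embedding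
whose range has dense linear span, and every Lipschitz function `f : M → ℝ` vanishing at
the base point lifts to a continuous linear functional of norm at most `Lip(f)` (this
characterizes `F(M)`, with dual `Lip₀(M)`, up to isometric isomorphism). -/
structure IsLipschitzFree {M : Type*} [MetricSpace M] (o : M)
    {F : Type*} [NormedAddCommGroup F] [NormedSpace ℝ F] (δ : M → F) : Prop where
  isometry : Isometry δ
  map_base : δ o = 0
  dense_span : Dense (Submodule.span ℝ (Set.range δ) : Set F)
  lift : ∀ (L : NNReal) (f : M → ℝ), LipschitzWith L f → f o = 0 →
    ∃ φ : F →L[ℝ] ℝ, ‖φ‖ ≤ L ∧ ∀ x, φ (δ x) = f x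

/-- The subspace of `F` corresponding to the Lipschitz-free space `F(S)` over a subset
`S ⊆ M`: the closed linear span of `δ(S)`. -/
def freeSpan {M : Type*} [MetricSpace M] {F : Type*} [NormedAddCommGroup F]
    [NormedSpace ℝ F] (δ : M → F) (S : Set M) : Submodule ℝ F :=
  (Submodule.span ℝ (δ '' S)).topologicalClosure

theorem mem_freeSpan {M : Type*} [MetricSpace M] {F : Type*} [NormedAddCommGroup F]
    [NormedSpace ℝ F] (δ : M → F) {S : Set M} {x : M} (hx : x ∈ S) :
    δ x ∈ freeSpan δ S :=
  (Submodule.span ℝ (δ '' S)).le_topologicalClosure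
    (Submodule.subset_span ⟨x, hx, rfl⟩)

/-!
Let `W ⊆ F(M)` be a (V*)-set. Functionals with pairwise disjoint supports on `M` and bounded
Lipschitz constants form a WUC series, so a gliding hump argument shows that `W` is uniformly
approximated by its image under multiplication by a Lipschitz cutoff concentrated near a finite set.
Composing infinitely many such multiplication operators, with supports shrinking to a compact set
`K` and rapidly decreasing errors, approximates `W` uniformly by a (V*)-set contained in `F(K)`.
An extension operator `Lip₀(K) → Lip₀(M)` sends WUC series to WUC series, so this set is a (V*)-set
within `F(K)` itself, where it is relatively weakly compact by hypothesis. By Grothendieck's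
criterion a set that is approximated to any precision by relatively weakly compact sets is itself
relatively weakly compact.
-/

section BanachSpaces

variable {X Y : Type*} [SeminormedAddCommGroup X] [NormedSpace ℝ X]
  [SeminormedAddCommGroup Y] [NormedSpace ℝ Y]

theorem IsWUC.map {y : ℕ → X} (hy : IsWUC y) (T : X →L[ℝ] Y) : IsWUC fun n => T (y n) :=
  fun φ => hy (φ.comp T)

theorem IsWUC.exists_norm_le [CompleteSpace X] {f : ℕ → X →L[ℝ] ℝ} (hf : IsWUC f) :
    ∃ C, ∀ n, ‖f n‖ ≤ C :=
  banach_steinhaus fun x => ⟨∑' n, |f n x|, fun n =>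
    (hf (NormedSpace.inclusionInDoubleDual ℝ X x)).le_tsum n fun _ _ => abs_nonneg _⟩

theorem IsWUC.of_norm_sum_smul_le {y : ℕ → X} {C : ℝ}
    (h : ∀ (s : Finset ℕ) (σ : ℕ → ℝ), (∀ n, |σ n| ≤ 1) → ‖∑ n ∈ s, σ n • y n‖ ≤ C) :
    IsWUC y := by
  intro φ
  refine summable_of_sum_le (c := ‖φ‖ * C) (fun _ => abs_nonneg _) fun s => ?_
  let σ : ℕ → ℝ := fun n => SignType.sign (φ (y n))
  have hσ : ∀ n, |σ n| ≤ 1 := fun n => by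
    rcases h : SignType.sign (φ (y n)) with _ | _ | _ <;> simp [σ, h]
  calc ∑ n ∈ s, |φ (y n)| = φ (∑ n ∈ s, σ n • y n) := by simp [σ, sign_mul_self]
    _ ≤ ‖φ‖ * C := (le_abs_self _).trans (φ.le_opNorm_of_le (h s σ hσ))

theorem IsVStarSet.image {Γ : Set X} (hΓ : IsVStarSet Γ) (T : X →L[ℝ] Y) :
    IsVStarSet (T '' Γ) := by
  intro f hf ε hε
  have hfT : IsWUC fun n => (f n).comp T :=
    hf.map ((ContinuousLinearMap.compL ℝ X Y ℝ).flip T)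
  simpa only [forall_mem_image] using! hΓ _ hfT ε hε

theorem IsVStarSet.of_approx [CompleteSpace X] {Γ : Set X}
    (h : ∀ ε > (0 : ℝ), ∃ Γ', IsVStarSet Γ' ∧ ∀ x ∈ Γ, ∃ y ∈ Γ', ‖x - y‖ ≤ ε) :
    IsVStarSet Γ := by
  intro f hf ε hε
  obtain ⟨C, hC⟩ := hf.exists_norm_le
  have hC₀ : 0 ≤ C := (norm_nonneg _).trans (hC 0)
  obtain ⟨Γ', hΓ', happrox⟩ := h (ε / 2 / (C + 1)) (by positivity)
  filter_upwards [hΓ' f hf (ε / 2) (half_pos hε)] with n hn x hx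
  obtain ⟨y, hy, hxy⟩ := happrox x hx
  have hdiff : |f n (x - y)| ≤ ε / 2 :=
    calc |f n (x - y)| ≤ C * (ε / 2 / (C + 1)) := (f n).le_of_opNorm_le_of_le (hC n) hxy
      _ ≤ (C + 1) * (ε / 2 / (C + 1)) := by gcongr; linarith
      _ = ε / 2 := by field_simp
  calc |f n x| = |f n (x - y) + f n y| := by rw [map_sub, sub_add_cancel]
    _ ≤ |f n (x - y)| + |f n y| := abs_add_le _ _
    _ ≤ ε := by linarith [hn y hy]

theorem IsVStarSet.image_of_tendstoUniformlyOn [CompleteSpace Y] {ι : Type*} {l : Filter ι}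
    [l.NeBot] {Γ : Set X} (hΓ : IsVStarSet Γ) {T : ι → X →L[ℝ] Y} {t : X → Y}
    (hT : TendstoUniformlyOn (fun i x => T i x) t l Γ) : IsVStarSet (t '' Γ) := by
  refine IsVStarSet.of_approx fun ε hε => ?_
  obtain ⟨i, hi⟩ := (Metric.tendstoUniformlyOn_iff.1 hT ε hε).exists
  refine ⟨T i '' Γ, hΓ.image (T i), forall_mem_image.2 fun x hx => ?_⟩
  exact ⟨T i x, mem_image_of_mem _ hx, dist_eq_norm (t x) (T i x) ▸ (hi x hx).le⟩

theorem IsVStarSet.preimage_of_extensionOperator {Γ : Set X} (hΓ : IsVStarSet Γ) {j : Y → X}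
    (E : (Y →L[ℝ] ℝ) →L[ℝ] X →L[ℝ] ℝ) (hE : ∀ f y, E f (j y) = f y) :
    IsVStarSet (j ⁻¹' Γ) := by
  intro f hf ε hε
  filter_upwards [hΓ _ (hf.map E) ε hε] with n hn y hy
  simpa only [hE] using hn (j y) hy

theorem RelWeaklyCompact.image {Γ : Set X} (hΓ : RelWeaklyCompact Γ) (T : X →L[ℝ] Y) :
    RelWeaklyCompact (T '' Γ) := by
  refine (IsCompact.image hΓ (WeakSpace.map T).continuous).closure_of_subset ?_
  rintro _ ⟨_, ⟨x, hx, rfl⟩, rfl⟩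
  exact mem_image_of_mem _ (subset_closure (mem_image_of_mem _ hx))

theorem mem_range_inclusionInDoubleDualWeak_of_approx {X : Type*} [NormedAddCommGroup X]
    [NormedSpace ℝ X] [CompleteSpace X] {ξ : WeakDual ℝ (StrongDual ℝ X)}
    (h : ∀ ε > 0, ∃ x,
      dist (NormedSpace.inclusionInDoubleDualLi (E := X) ℝ x) (WeakDual.toStrongDual ξ) ≤ ε) :
    ξ ∈ range (NormedSpace.inclusionInDoubleDualWeak ℝ X) := by
  let J := NormedSpace.inclusionInDoubleDualLi (E := X) ℝ
  have hclosed : IsClosed (range J) :=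
    (Isometry.isClosedEmbedding (γ := StrongDual ℝ (StrongDual ℝ X)) J.isometry).isClosed_range
  have hmem : WeakDual.toStrongDual ξ ∈ closure (range J) :=
    (mem_closure_iff_nhds_basis
      (nhds_basis_closedBall (α := StrongDual ℝ (StrongDual ℝ X)))).2 fun ε hε =>
        exists_range_iff.2 (h ε hε)
  obtain ⟨x, hx⟩ := hclosed.closure_subset hmem
  exact ⟨toWeakSpace ℝ X x, hx⟩

open scoped Pointwise in
/-- Grothendieck's criterion: as `J(Γ')` plus the closed `ε`-ball of the bidual is weak*-compact, it
contains the weak*-closure of `J(Γ)`, all of whose points are therefore norm limits of `J(X)`. -/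
theorem RelWeaklyCompact.of_approx {X : Type*} [NormedAddCommGroup X] [NormedSpace ℝ X]
    [CompleteSpace X] {Γ : Set X}
    (h : ∀ ε > (0 : ℝ), ∃ Γ', RelWeaklyCompact Γ' ∧ ∀ x ∈ Γ, ∃ y ∈ Γ', ‖x - y‖ ≤ ε) :
    RelWeaklyCompact Γ := by
  let J := NormedSpace.inclusionInDoubleDualWeak ℝ X
  let J' := NormedSpace.inclusionInDoubleDualLi (E := X) ℝ
  let K := closure (J '' (toWeakSpace ℝ X '' Γ))
  have hK_approx : ∀ ε > 0, IsCompact K ∧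
      ∀ ξ ∈ K, ∃ x, dist (J' x) (WeakDual.toStrongDual ξ) ≤ ε := by
    intro ε hε
    obtain ⟨Γ', hΓ', happrox⟩ := h ε hε
    have hcompact := (IsCompact.image hΓ' J.continuous).add (WeakDual.isCompact_closedBall 0 ε)
    have hK_subset : K ⊆ J '' closure (toWeakSpace ℝ X '' Γ') +
        WeakDual.toStrongDual ⁻¹' closedBall 0 ε := by
      refine closure_minimal ?_ hcompact.isClosed
      rintro _ ⟨_, ⟨x, hx, rfl⟩, rfl⟩
      obtain ⟨y, hy, hxy⟩ := happrox x hx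
      have hJxy : ‖J' (x - y)‖ ≤ ε := (J'.norm_map (x - y)).trans_le hxy
      exact ⟨_, mem_image_of_mem J (subset_closure (mem_image_of_mem _ hy)),
        J (toWeakSpace ℝ X (x - y)),
        (mem_closedBall_zero_iff (E := StrongDual ℝ (StrongDual ℝ X))).2 hJxy,
        by simp only [map_sub, add_sub_cancel]⟩
    refine ⟨hcompact.of_isClosed_subset isClosed_closure hK_subset, fun ξ hξ => ?_⟩
    obtain ⟨_, ⟨x, -, rfl⟩, η, hη, rfl⟩ := hK_subset hξ
    exact ⟨(toWeakSpace ℝ X).symm x,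
      (dist_self_add_right (E := StrongDual ℝ (StrongDual ℝ X)) _ _).trans_le
        ((mem_closedBall_zero_iff (E := StrongDual ℝ (StrongDual ℝ X))).1 hη)⟩
  have hK_range : K ⊆ range J := fun ξ hξ =>
    mem_range_inclusionInDoubleDualWeak_of_approx fun ε hε => (hK_approx ε hε).2 ξ hξ
  have hJ := NormedSpace.isEmbedding_inclusionInDoubleDualWeak ℝ X
  rw [RelWeaklyCompact, hJ.closure_eq_preimage_closure_image]
  exact hJ.isCompact_preimage' (hK_approx 1 one_pos).1 hK_range

theorem tendsto_apply_of_dense_span {ι : Type*} {l : Filter ι} {T : ι → X →L[ℝ] Y}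
    {A : X →L[ℝ] Y} {C : ℝ} (hT : ∀ i, ‖T i‖ ≤ C) {s : Set X}
    (hs : Dense (Submodule.span ℝ s : Set X))
    (h : ∀ x ∈ s, Tendsto (fun i => T i x) l (𝓝 (A x))) (x : X) :
    Tendsto (fun i => T i x) l (𝓝 (A x)) := by
  have hequi : Equicontinuous fun i => ⇑(T i) :=
    (show (∃ C, ∀ i, ‖T i‖ ≤ C) ↔ _ from (NormedSpace.equicontinuous_TFAE T).out 5 1).1 ⟨C, hT⟩
  refine (hequi.isClosed_setOfPred_tendsto A.continuous).closure_subset_iff.2 ?_ (hs x)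
  intro y hy
  induction hy using Submodule.span_induction with
  | mem y hy => exact h y hy
  | zero => simpa only [mem_ofPred_eq, map_zero] using tendsto_const_nhds
  | add y z _ _ hy hz => simpa using hy.add hz
  | smul a y _ hy => simpa using hy.const_smul a

end BanachSpaces

theorem lipschitzWith_sum_of_disjoint_support {ι M V : Type*} [PseudoMetricSpace M]
    [SeminormedAddCommGroup V] {f : ι → M → V} {L : NNReal}
    (hf : ∀ i, LipschitzWith L (f i))
    (hdisj : Pairwise (Function.onFun Disjoint fun i => Function.support (f i))) (s : Finset ι) :
    LipschitzWith (2 * L) fun p => ∑ i ∈ s, f i p := by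
  classical
  refine LipschitzWith.of_dist_le_mul fun p q => ?_
  let A : M → Finset ι := fun r => {i ∈ s | f i r ≠ 0}
  have hA_card : ∀ r, (A r).card ≤ 1 := fun r => Finset.card_le_one.2 fun i hi j hj => by
    by_contra hij
    exact (hdisj hij).le_bot
      ⟨Function.mem_support.2 (Finset.mem_filter.1 hi).2, (Finset.mem_filter.1 hj).2⟩
  have hzero : ∀ i ∈ s, i ∉ A p ∪ A q → f i p - f i q = 0 := fun i hi hiA => by
    simp only [A, Finset.mem_union, Finset.mem_filter, hi, true_and, not_or, not_not] at hiA
    rw [hiA.1, hiA.2, sub_zero]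
  calc dist (∑ i ∈ s, f i p) (∑ i ∈ s, f i q)
      = ‖∑ i ∈ A p ∪ A q, (f i p - f i q)‖ := by
        rw [dist_eq_norm, ← Finset.sum_sub_distrib, Finset.sum_subset _ hzero]
        exact Finset.union_subset (Finset.filter_subset _ _) (Finset.filter_subset _ _)
    _ ≤ ∑ i ∈ A p ∪ A q, ‖f i p - f i q‖ := norm_sum_le _ _
    _ ≤ (A p ∪ A q).card • (L * dist p q) :=
        Finset.sum_le_card_nsmul _ _ _ fun i _ => by
          rw [← dist_eq_norm]; exact (hf i).dist_le_mul p q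
    _ ≤ 2 * (L * dist p q) := by
        rw [nsmul_eq_mul]
        gcongr
        exact_mod_cast (Finset.card_union_le _ _).trans (add_le_add (hA_card p) (hA_card q))
    _ = ↑(2 * L) * dist p q := by push_cast; ring

theorem exists_forall_mem_eq_zero_of_notMem {X : Type*} [SeminormedAddCommGroup X]
    [NormedSpace ℝ X] {S : Submodule ℝ X} (hS : IsClosed (S : Set X)) {z : X} (hz : z ∉ S) :
    ∃ φ : X →L[ℝ] ℝ, (∀ y ∈ S, φ y = 0) ∧ φ z ≠ 0 := by
  have hz' : S.mkQL z ≠ 0 := fun h => hz ((Submodule.Quotient.mk_eq_zero S).1 h)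
  obtain ⟨φ, hφ⟩ := SeparatingDual.exists_ne_zero (R := ℝ) hz'
  refine ⟨φ.comp S.mkQL, fun y hy => ?_, hφ⟩
  exact (congrArg φ ((Submodule.Quotient.mk_eq_zero S).2 hy)).trans (map_zero φ)

section LipschitzFree

open scoped NNReal

variable {M : Type*} [MetricSpace M] {o : M} {F : Type*} [NormedAddCommGroup F]
  [NormedSpace ℝ F] {δ : M → F} {G : Type*} [NormedAddCommGroup G] [NormedSpace ℝ G]

theorem eqOn_freeSpan {S : Set M} {A B : F →L[ℝ] G} (h : ∀ p ∈ S, A (δ p) = B (δ p)) :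
    EqOn A B (freeSpan δ S) :=
  ContinuousLinearMap.eqOn_closure_span (forall_mem_image.2 h)

theorem isClosed_freeSpan (S : Set M) : IsClosed (freeSpan δ S : Set F) :=
  Submodule.isClosed_topologicalClosure _

namespace IsLipschitzFree

theorem clm_ext (hδ : IsLipschitzFree o δ) {A B : F →L[ℝ] G} (h : ∀ p, A (δ p) = B (δ p)) :
    A = B :=
  ContinuousLinearMap.ext_on hδ.dense_span (forall_mem_range.2 h)

theorem tendsto_apply (hδ : IsLipschitzFree o δ) {ι : Type*} {l : Filter ι} {T : ι → F →L[ℝ] G}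
    {A : F →L[ℝ] G} {C : ℝ} (hT : ∀ i, ‖T i‖ ≤ C)
    (h : ∀ p, Tendsto (fun i => T i (δ p)) l (𝓝 (A (δ p)))) (x : F) :
    Tendsto (fun i => T i x) l (𝓝 (A x)) :=
  tendsto_apply_of_dense_span hT hδ.dense_span (forall_mem_range.2 h) x

theorem apply_mem_freeSpan (hδ : IsLipschitzFree o δ) {S : Set M} {T : F →L[ℝ] F}
    (hT : ∀ p, T (δ p) ∈ freeSpan δ S) (x : F) : T x ∈ freeSpan δ S := by
  have hspan : Submodule.span ℝ (range δ) ≤ (freeSpan δ S).comap T.toLinearMap :=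
    Submodule.span_le.2 (forall_mem_range.2 hT)
  exact ((isClosed_freeSpan S).preimage T.continuous).closure_subset_iff.2 hspan
    (hδ.dense_span x)

theorem lipschitzWith_comp (hδ : IsLipschitzFree o δ) (φ : F →L[ℝ] G) :
    LipschitzWith ‖φ‖₊ fun p => φ (δ p) := by
  simpa only [mul_one] using! φ.lipschitz.comp hδ.isometry.lipschitz

theorem norm_le_of_lipschitzWith (hδ : IsLipschitzFree o δ) {φ : F →L[ℝ] ℝ} {L : ℝ≥0}
    (h : LipschitzWith L fun p => φ (δ p)) : ‖φ‖ ≤ L := by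
  obtain ⟨ψ, hψ_norm, hψ⟩ := hδ.lift L _ h (by simp only [hδ.map_base, map_zero])
  rwa [hδ.clm_ext fun p => (hψ p).symm]

theorem exists_lift (hδ : IsLipschitzFree o δ) [CompleteSpace G] {L : ℝ≥0} {g : M → G}
    (hg : LipschitzWith L g) (hg_base : g o = 0) :
    ∃ T : F →L[ℝ] G, ‖T‖ ≤ L ∧ ∀ p, T (δ p) = g p := by
  let e : (M →₀ ℝ) →ₗ[ℝ] F := Finsupp.linearCombination ℝ δ
  let f : (M →₀ ℝ) →ₗ[ℝ] G := Finsupp.linearCombination ℝ g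
  have hdense : DenseRange e := by
    simpa only [DenseRange, ← Finsupp.range_linearCombination] using! hδ.dense_span
  have hnorm : ∀ x, ‖f x‖ ≤ L * ‖e x‖ := by
    intro x
    obtain ⟨φ, hφ_norm, hφ⟩ := exists_dual_vector'' ℝ (f x)
    have hφg : LipschitzWith L fun p => φ (g p) := by
      simpa only [one_mul] using! (φ.lipschitz.weaken (show ‖φ‖₊ ≤ 1 from hφ_norm)).comp hg
    obtain ⟨ψ, hψ_norm, hψ⟩ := hδ.lift L _ hφg (by rw [hg_base, map_zero])
    have hcomp : φ.toLinearMap ∘ₗ f = ψ.toLinearMap ∘ₗ e := by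
      ext p
      simp [e, f, hψ]
    calc ‖f x‖ = ψ (e x) := hφ.symm.trans (LinearMap.congr_fun hcomp x)
      _ ≤ ‖ψ (e x)‖ := le_abs_self _
      _ ≤ L * ‖e x‖ := ψ.le_of_opNorm_le hψ_norm _
  refine ⟨f.extendOfNorm e, LinearMap.opNorm_extendOfNorm_le hdense L.2 hnorm, fun p => ?_⟩
  simpa [e, f] using LinearMap.extendOfNorm_eq hdense ⟨L, hnorm⟩ (Finsupp.single p 1)

theorem isWUC_of_disjoint_support (hδ : IsLipschitzFree o δ) {L : ℝ≥0} {f : ℕ → F →L[ℝ] ℝ}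
    (hf : ∀ n, ‖f n‖ ≤ L)
    (hdisj : Pairwise (Function.onFun Disjoint fun n => Function.support fun p => f n (δ p))) :
    IsWUC f := by
  refine IsWUC.of_norm_sum_smul_le (C := ↑(2 * L)) fun s σ hσ => ?_
  refine hδ.norm_le_of_lipschitzWith ?_
  have hlip : ∀ n, LipschitzWith L fun p => (σ n • f n) (δ p) := fun n =>
    (hδ.lipschitzWith_comp (σ n • f n)).weaken <| by
      rw [← NNReal.coe_le_coe, coe_nnnorm, norm_smul]
      exact (mul_le_of_le_one_left (norm_nonneg _) (hσ n)).trans (hf n)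
  have hsupp : ∀ n, (Function.support fun p => (σ n • f n) (δ p)) ⊆
      Function.support fun p => f n (δ p) := fun n =>
    Function.support_const_smul_subset (σ n) _
  simpa only [sum_apply] using
    lipschitzWith_sum_of_disjoint_support hlip
      (fun m n hmn => (hdisj hmn).mono (hsupp m) (hsupp n)) s

/-- A functional vanishing on `freeSpan δ K` agrees near `K` with its truncations at the levels
`1 / (n + 1)`, and these tend to `0` pointwise. -/
theorem mem_freeSpan_of_forall_isOpen (hδ : IsLipschitzFree o δ) {K : Set M} {z : F}
    (h : ∀ U, IsOpen U → K ⊆ U → z ∈ freeSpan δ U) : z ∈ freeSpan δ K := by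
  by_contra hz
  obtain ⟨φ, hφK, hφz⟩ := exists_forall_mem_eq_zero_of_notMem (isClosed_freeSpan K) hz
  let r : ℕ → ℝ := fun n => 1 / (n + 1)
  have hr : ∀ n, 0 < r n := fun n => Nat.one_div_pos_of_nat
  have hrr : ∀ n, -r n ≤ r n := fun n => neg_le_self (hr n).le
  have htrunc : ∀ n, ∃ ψ : F →L[ℝ] ℝ, ‖ψ‖ ≤ ‖φ‖₊ ∧
      ∀ p, ψ (δ p) = projIcc (-r n) (r n) (hrr n) (φ (δ p)) := fun n => by
    refine hδ.lift _ _ ?_ ?_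
    · simpa only [one_mul] using!
        (LipschitzWith.subtype_val _).comp
          ((LipschitzWith.projIcc (hrr n)).comp (hδ.lipschitzWith_comp φ))
    · rw [hδ.map_base, map_zero, projIcc_of_mem _ ⟨neg_nonpos.2 (hr n).le, (hr n).le⟩]
  choose ψ hψ_norm hψ using htrunc
  have hψz : ∀ n, ψ n z = φ z := fun n => by
    let U := {p | φ (δ p) ∈ Ioo (-r n) (r n)}
    have hU : IsOpen U := isOpen_Ioo.preimage (φ.continuous.comp hδ.isometry.continuous)
    have hKU : K ⊆ U := fun p hp => by
      change φ (δ p) ∈ Ioo _ _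
      rw [hφK _ (mem_freeSpan δ hp)]
      exact ⟨neg_neg_of_pos (hr n), hr n⟩
    refine eqOn_freeSpan (fun p hp => ?_) (h U hU hKU)
    rw [hψ, projIcc_of_mem _ (Ioo_subset_Icc_self hp)]
  have hlim : Tendsto (fun n => ψ n z) atTop (𝓝 ((0 : F →L[ℝ] ℝ) z)) := by
    refine hδ.tendsto_apply hψ_norm (fun p => ?_) z
    refine squeeze_zero_norm (fun n => ?_) tendsto_one_div_add_atTop_nhds_zero_nat
    rw [hψ]
    exact abs_le.2 (projIcc _ _ (hrr n) (φ (δ p))).2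
  simp only [hψz, zero_apply] at hlim
  exact hφz (tendsto_nhds_unique tendsto_const_nhds hlim)

end IsLipschitzFree

end LipschitzFree

section Cutoffs

open scoped NNReal

variable {M : Type*} [PseudoMetricSpace M] {o : M}

/-- `u` is a weight bounded by one whose variation is controlled so that multiplication by `u` is an
operator of norm at most `1 + c` on `Lip₀(M)`, and hence (by preadjoints) on the Lipschitz-free
space. -/
def IsMultiplier (o : M) (c : ℝ≥0) (u : M → ℝ) : Prop :=
  (∀ p, |u p| ≤ 1) ∧ ∀ p q, dist p o * |u p - u q| ≤ c * dist p q

theorem IsMultiplier.lipschitzWith_smul {V : Type*} [SeminormedAddCommGroup V]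
    [NormedSpace ℝ V] {c : ℝ≥0} {u : M → ℝ} (hu : IsMultiplier o c u) {L : ℝ≥0} {f : M → V}
    (hf : LipschitzWith L f) (hf_base : f o = 0) :
    LipschitzWith (L * (1 + c)) fun p => u p • f p := by
  refine LipschitzWith.of_dist_le_mul fun p q => ?_
  have hfp : ‖f p‖ ≤ L * dist p o := by simpa [hf_base] using hf.dist_le_mul p o
  have hfpq : ‖f p - f q‖ ≤ L * dist p q := by simpa [dist_eq_norm] using hf.dist_le_mul p q
  calc dist (u p • f p) (u q • f q) = ‖(u p - u q) • f p + u q • (f p - f q)‖ := by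
        rw [dist_eq_norm, sub_smul, smul_sub, sub_add_sub_cancel]
    _ ≤ |u p - u q| * ‖f p‖ + |u q| * ‖f p - f q‖ := by
        simpa only [norm_smul, Real.norm_eq_abs] using
          norm_add_le ((u p - u q) • f p) (u q • (f p - f q))
    _ ≤ |u p - u q| * (L * dist p o) + 1 * (L * dist p q) := by
        gcongr
        exact hu.1 q
    _ = L * (dist p o * |u p - u q|) + L * dist p q := by ring
    _ ≤ L * (c * dist p q) + L * dist p q := by
        gcongr L * ?_ + L * dist p q
        exact hu.2 p q
    _ = ↑(L * (1 + c)) * dist p q := by push_cast; ring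

/-- The distance of `p` to `S ∪ {o}`, relative to the size `1 + dist p o` of `p`. This scaling makes
Lipschitz functions of `relInfDist` multipliers of `Lip₀(M)`, whose elements may be unbounded. -/
def relInfDist (o : M) (S : Set M) (p : M) : ℝ :=
  infDist p (insert o S) / (1 + dist p o)

theorem relInfDist_of_mem {S : Set M} {p : M} (hp : p ∈ insert o S) : relInfDist o S p = 0 := by
  rw [relInfDist, infDist_zero_of_mem hp, zero_div]

theorem relInfDist_anti (p : M) : Antitone fun S => relInfDist o S p := by
  intro S S' h
  have := infDist_le_infDist_of_subset (x := p) (insert_subset_insert h) (insert_nonempty o S)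
  exact div_le_div_of_nonneg_right this (by positivity)

theorem dist_mul_abs_relInfDist_sub_le (S : Set M) (p q : M) :
    dist p o * |relInfDist o S p - relInfDist o S q| ≤ 2 * dist p q := by
  have hq : infDist q (insert o S) ≤ 1 + dist q o :=
    (infDist_le_dist_of_mem (mem_insert o S)).trans (by linarith)
  have hq_rel : relInfDist o S q ≤ 1 := div_le_one_of_le₀ hq (by positivity)
  have hq_nonneg : 0 ≤ relInfDist o S q := div_nonneg infDist_nonneg (by positivity)
  have hpq : |infDist p (insert o S) - infDist q (insert o S)| ≤ dist p q := by
    simpa [Real.dist_eq] using (lipschitz_infDist_pt (insert o S)).dist_le_mul p q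
  have hsize : |dist q o - dist p o| ≤ dist p q := by
    rw [dist_comm p q]; exact abs_dist_sub_le q p o
  calc dist p o * |relInfDist o S p - relInfDist o S q|
      ≤ (1 + dist p o) * |relInfDist o S p - relInfDist o S q| := by gcongr; linarith
    _ = |(1 + dist p o) * (relInfDist o S p - relInfDist o S q)| := by
        rw [abs_mul, abs_of_pos (by positivity : 0 < 1 + dist p o)]
    _ = |infDist p (insert o S) - infDist q (insert o S) +
          relInfDist o S q * (dist q o - dist p o)| := by
        unfold relInfDist
        congr 1
        field_simp
        ring
    _ ≤ dist p q + 1 * dist p q := by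
        refine (abs_add_le _ _).trans ?_
        rw [abs_mul, abs_of_nonneg hq_nonneg]
        gcongr
    _ = 2 * dist p q := by ring

/-- For `r > 0`, the weight equal to `1` where `relInfDist o S ≤ s`, to `0` where
`relInfDist o S ≥ s + r`, and interpolating affinely in between. For `r = 0` it is constant. -/
def cutoff (o : M) (s : ℝ) (r : ℝ≥0) (S : Set M) (p : M) : ℝ :=
  projIcc (0 : ℝ) 1 zero_le_one (1 - (relInfDist o S p - s) / r)

theorem cutoff_eq_one {s : ℝ} (r : ℝ≥0) {S : Set M} {p : M} (h : relInfDist o S p ≤ s) :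
    cutoff o s r S p = 1 := by
  have : 1 ≤ 1 - (relInfDist o S p - s) / r := by
    linarith [div_nonpos_of_nonpos_of_nonneg (sub_nonpos.2 h) r.coe_nonneg]
  rw [cutoff, projIcc_of_right_le _ this]

theorem relInfDist_lt_of_cutoff_ne_zero {s : ℝ} {r : ℝ≥0} (hr : 0 < r) {S : Set M} {p : M}
    (h : cutoff o s r S p ≠ 0) : relInfDist o S p < s + r := by
  contrapose! h
  have : 1 - (relInfDist o S p - s) / r ≤ 0 := by
    rw [sub_nonpos, one_le_div (by exact_mod_cast hr)]
    linarith
  rw [cutoff, projIcc_of_le_left _ this]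

theorem isMultiplier_cutoff (o : M) (s : ℝ) (r : ℝ≥0) (S : Set M) :
    IsMultiplier o (2 / r) (cutoff o s r S) := by
  refine ⟨fun p => ?_, fun p q => ?_⟩
  · have hmem := (projIcc (0 : ℝ) 1 zero_le_one (1 - (relInfDist o S p - s) / r)).2
    exact abs_le.2 ⟨(neg_nonpos.2 zero_le_one).trans hmem.1, hmem.2⟩
  · have hproj : |cutoff o s r S p - cutoff o s r S q| ≤
        |relInfDist o S p - relInfDist o S q| / r := by
      refine ((LipschitzWith.projIcc zero_le_one).dist_le_mul _ _).trans_eq ?_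
      rw [NNReal.coe_one, one_mul, dist_sub_left, Real.dist_eq, ← sub_div, abs_div, NNReal.abs_eq,
        sub_sub_sub_cancel_right]
    calc dist p o * |cutoff o s r S p - cutoff o s r S q|
        ≤ dist p o * (|relInfDist o S p - relInfDist o S q| / r) := by gcongr
      _ = dist p o * |relInfDist o S p - relInfDist o S q| / r := by ring
      _ ≤ 2 * dist p q / r := by
          gcongr ?_ / _
          exact dist_mul_abs_relInfDist_sub_le S p q
      _ = ↑(2 / r) * dist p q := by push_cast; ring

end Cutoffs

section CutoffOperators

open scoped NNReal

variable {M : Type*} [MetricSpace M] {o : M} {F : Type*} [NormedAddCommGroup F]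
  [NormedSpace ℝ F] {δ : M → F}

theorem IsMultiplier.exists_operator [CompleteSpace F] (hδ : IsLipschitzFree o δ) {c : ℝ≥0}
    {u : M → ℝ} (hu : IsMultiplier o c u) :
    ∃ T : F →L[ℝ] F, ‖T‖ ≤ ↑(1 + c) ∧ ∀ p, T (δ p) = u p • δ p := by
  refine hδ.exists_lift ?_ (by rw [hδ.map_base, smul_zero])
  simpa only [one_mul] using hu.lipschitzWith_smul hδ.isometry.lipschitz hδ.map_base

/-- Gliding hump: were this false, one could choose infinitely many such functionals with disjoint
supports, and these form a WUC series. -/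
theorem IsVStarSet.exists_forall_abs_apply_le (hδ : IsLipschitzFree o δ) {W : Set F}
    (hW : IsVStarSet W) {ι : Type*} [Preorder ι] [Nonempty ι] {N : ι → Set M} (hN : Monotone N)
    (L : ℝ≥0) {ε : ℝ} (hε : 0 < ε) :
    ∃ i, ∀ j ≥ i, ∀ f : F →L[ℝ] ℝ, ‖f‖ ≤ L →
      (Function.support fun p => f (δ p)) ⊆ N j \ N i → ∀ x ∈ W, |f x| ≤ ε := by
  by_contra! hcon
  choose next hnext f hf_norm hf_supp x hxW hfx using hcon
  let i : ℕ → ι := fun n => next^[n] (Classical.arbitrary ι)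
  have hi_succ : ∀ n, i (n + 1) = next (i n) := fun n => Function.iterate_succ_apply' _ _ _
  have hi_mono : Monotone i := monotone_nat_of_le_succ fun n => hi_succ n ▸ hnext (i n)
  have hdisj : Pairwise (Function.onFun Disjoint fun n =>
      Function.support fun p => f (i n) (δ p)) := by
    refine (pairwise_disjoint_on _).2 fun m n hmn => ?_
    refine disjoint_sdiff_right.mono ((hf_supp (i m)).trans ?_) (hf_supp (i n))
    rw [← hi_succ]
    exact sdiff_subset.trans (hN (hi_mono hmn))
  have hWUC : IsWUC fun n => f (i n) :=
    hδ.isWUC_of_disjoint_support (fun n => hf_norm (i n)) hdisj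
  obtain ⟨n, hn⟩ := (hW _ hWUC ε hε).exists
  exact (hn _ (hxW (i n))).not_gt (hfx (i n))

theorem IsLipschitzFree.tendsto_cutoff_operator (hδ : IsLipschitzFree o δ) {s : ℝ} (hs : 0 ≤ s)
    {r : ℝ≥0} {T : Finset M → F →L[ℝ] F} {C : ℝ} (hT_norm : ∀ S, ‖T S‖ ≤ C)
    (hT : ∀ S p, T S (δ p) = cutoff o s r S p • δ p) (x : F) :
    Tendsto (fun S => T S x) atTop (𝓝 x) := by
  refine hδ.tendsto_apply (A := .id ℝ F) hT_norm (fun p => ?_) x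
  refine tendsto_const_nhds.congr' ?_
  filter_upwards [eventually_ge_atTop {p}] with S hS
  have hp : p ∈ insert o (S : Set M) := mem_insert_of_mem _ (Finset.singleton_subset_iff.1 hS)
  rw [hT, cutoff_eq_one r ((relInfDist_of_mem hp).trans_le hs), one_smul]
  rfl

theorem IsVStarSet.exists_cutoff_operator [CompleteSpace F] (hδ : IsLipschitzFree o δ)
    {W : Set F} (hW : IsVStarSet W) {r : ℝ≥0} (hr : 0 < r) {ε : ℝ} (hε : 0 < ε) :
    ∃ (S : Finset M) (T : F →L[ℝ] F), ‖T‖ ≤ ↑(1 + 2 / r) ∧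
      (∀ p, T (δ p) = cutoff o r r S p • δ p) ∧ ∀ x ∈ W, ‖x - T x‖ ≤ ε := by
  -- As `S'` grows, `B S'` tends to the identity, while the functionals `φ ∘ B S' ∘ (1 - A S)` are
  -- supported where `relInfDist o S' ≤ r < relInfDist o S`.
  choose A hA_norm hA using fun S : Finset M => (isMultiplier_cutoff o r r S).exists_operator hδ
  choose B hB_norm hB using fun S : Finset M => (isMultiplier_cutoff o 0 r S).exists_operator hδ
  have hN : Monotone fun S : Finset M => {p | relInfDist o S p ≤ r} := fun S S' h p hp =>
    (relInfDist_anti p (Finset.coe_subset.2 h)).trans hp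
  let L : ℝ≥0 := 1 * (1 + 2 / r) * (1 + (1 + 2 / r))
  obtain ⟨S, hS⟩ := hW.exists_forall_abs_apply_le hδ hN L hε
  refine ⟨S, A S, hA_norm S, hA S, fun x hx => ?_⟩
  refine le_of_tendsto (hδ.tendsto_cutoff_operator le_rfl hB_norm hB (x - A S x)).norm ?_
  filter_upwards [eventually_ge_atTop S] with S' hSS'
  obtain ⟨φ, hφ_norm, hφ⟩ := exists_dual_vector'' ℝ (B S' (x - A S x))
  let f : F →L[ℝ] ℝ := (φ.comp (B S')).comp (.id ℝ F - A S)
  have hf_norm : ‖f‖ ≤ L := by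
    refine (ContinuousLinearMap.opNorm_comp_le _ _).trans ?_
    push_cast [L]
    gcongr
    · exact (ContinuousLinearMap.opNorm_comp_le _ _).trans (by gcongr; exact_mod_cast hB_norm S')
    · refine (norm_sub_le _ _).trans ?_
      gcongr
      · exact ContinuousLinearMap.norm_id_le
      · exact_mod_cast hA_norm S
  have hf_supp : (Function.support fun p => f (δ p)) ⊆
      {p | relInfDist o S' p ≤ r} \ {p | relInfDist o S p ≤ r} := by
    intro p hp
    have hfp : f (δ p) = (1 - cutoff o r r S p) * (cutoff o 0 r S' p * φ (δ p)) := by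
      simp [f, hA, hB, sub_mul]
    rw [Function.mem_support, hfp] at hp
    refine ⟨?_, fun hpS => ?_⟩
    · have := relInfDist_lt_of_cutoff_ne_zero hr (left_ne_zero_of_mul (right_ne_zero_of_mul hp))
      exact (this.trans_eq (zero_add _)).le
    · exact left_ne_zero_of_mul hp (by rw [cutoff_eq_one r hpS, sub_self])
  calc ‖B S' (x - A S x)‖ = f x := hφ.symm
    _ ≤ |f x| := le_abs_self _
    _ ≤ ε := hS S' hSS' f hf_norm hf_supp x hx

end CutoffOperators

section CompactReduction

theorem mem_of_forall_clusterPt_mem {α : Type*} [UniformSpace α] [CompleteSpace α]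
    {f : Filter α} (hf : f.TotallyBounded) {U : Set α} (hU : IsOpen U)
    (h : ∀ x, ClusterPt x f → x ∈ U) : U ∈ f := by
  by_contra hUf
  have : (f ⊓ 𝓟 Uᶜ).NeBot := neBot_iff.2 fun hbot => hUf <| mem_iff_inf_principal_compl.2 hbot
  obtain ⟨x, hx⟩ := (hf.mono (inf_le_left : f ⊓ 𝓟 Uᶜ ≤ f)).exists_clusterPt
  have hxU : x ∈ Uᶜ := hU.isClosed_compl.closure_subset
    (mem_closure_iff_clusterPt.2 (hx.mono inf_le_right))
  exact hxU (h x (hx.mono inf_le_left))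

section Composition

variable {X : Type*} [SeminormedAddCommGroup X] [NormedSpace ℝ X]

theorem list_prod_apply_of_forall_apply_eq_smul {U : ℕ → X →L[ℝ] X} {u : ℕ → ℝ} {x : X}
    (h : ∀ n, U n x = u n • x) (n : ℕ) :
    ((List.range n).map U).prod x = (∏ k ∈ Finset.range n, u k) • x := by
  induction n with
  | zero => simp
  | succ n ih =>
    rw [List.prod_range_succ, mul_apply_eq_comp, h, map_smul, ih, smul_smul,
      Finset.prod_range_succ_comm]

theorem norm_list_prod_le {U : ℕ → X →L[ℝ] X} {c : ℕ → ℝ} (h : ∀ n, ‖U n‖ ≤ c n) (n : ℕ) :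
    ‖((List.range n).map U).prod‖ ≤ ∏ k ∈ Finset.range n, c k := by
  induction n with
  | zero => exact ContinuousLinearMap.norm_id_le
  | succ n ih =>
    rw [List.prod_range_succ, Finset.prod_range_succ]
    exact (norm_mul_le _ _).trans
      (mul_le_mul ih (h n) (norm_nonneg _) ((norm_nonneg _).trans ih))

theorem exists_tendstoUniformlyOn_list_prod [CompleteSpace X] {W : Set X}
    {𝒰 : ℕ → Set (X →L[ℝ] X)} {c : ℕ → ℝ} (h𝒰 : ∀ n, ∀ U ∈ 𝒰 n, ‖U‖ ≤ c n)
    (h : ∀ n, ∀ ε > (0 : ℝ), ∃ U ∈ 𝒰 n, ∀ x ∈ W, ‖x - U x‖ ≤ ε) {ε : ℝ} (hε : 0 < ε) :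
    ∃ U : ℕ → X →L[ℝ] X, (∀ n, U n ∈ 𝒰 n) ∧ ∃ t : X → X,
      TendstoUniformlyOn (fun n x => ((List.range n).map U).prod x) t atTop W ∧
        ∀ x ∈ W, ‖x - t x‖ ≤ ε := by
  have hc : ∀ n, 0 ≤ c n := fun n => by
    obtain ⟨U, hU, -⟩ := h n 1 one_pos
    exact (norm_nonneg U).trans (h𝒰 n U hU)
  let C : ℕ → ℝ := fun n => ∏ k ∈ Finset.range n, c k
  have hC : ∀ n, 0 ≤ C n := fun n => Finset.prod_nonneg fun k _ => hc k
  have hε_pos : ∀ n, 0 < ε / 2 / 2 ^ n / (C n + 1) := fun n => by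
    have := hC n
    positivity
  choose U hU𝒰 hU using fun n => h n _ (hε_pos n)
  let T : ℕ → X →L[ℝ] X := fun n => ((List.range n).map U).prod
  have hT_step : ∀ x ∈ W, ∀ n, dist (T n x) (T (n + 1) x) ≤ ε / 2 / 2 ^ n := fun x hx n =>
    calc dist (T n x) (T (n + 1) x) = ‖T n (x - U n x)‖ := by
          simp only [T, List.prod_range_succ, mul_apply_eq_comp, dist_eq_norm, map_sub]
      _ ≤ C n * (ε / 2 / 2 ^ n / (C n + 1)) :=
          (T n).le_of_opNorm_le_of_le (norm_list_prod_le (fun k => h𝒰 k _ (hU𝒰 k)) n) (hU n x hx)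
      _ ≤ (C n + 1) * (ε / 2 / 2 ^ n / (C n + 1)) :=
          mul_le_mul_of_nonneg_right (le_add_of_nonneg_right zero_le_one) (hε_pos n).le
      _ = ε / 2 / 2 ^ n := mul_div_cancel₀ _ (by linarith [hC n])
  have hT_lim : ∀ x ∈ W, ∃ y, Tendsto (fun n => T n x) atTop (𝓝 y) := fun x hx =>
    cauchySeq_tendsto_of_complete (cauchySeq_of_le_geometric_two (hT_step x hx))
  choose! t ht using hT_lim
  refine ⟨U, hU𝒰, t, ?_, fun x hx => ?_⟩
  · have hzero : Tendsto (fun n : ℕ => ε / 2 ^ n) atTop (𝓝 0) :=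
      tendsto_const_nhds.div_atTop (tendsto_pow_atTop_atTop_of_one_lt one_lt_two)
    refine Metric.tendstoUniformlyOn_iff.2 fun η hη => ?_
    filter_upwards [hzero.eventually_lt_const hη] with n hn x hx
    rw [dist_comm]
    exact (dist_le_of_le_geometric_two_of_tendsto (hT_step x hx) (ht x hx) n).trans_lt hn
  · rw [← dist_eq_norm]
    exact dist_le_of_le_geometric_two_of_tendsto₀ (hT_step x hx) (ht x hx)

end Composition

section RelInfDist

variable {M : Type*} [PseudoMetricSpace M] {o : M}

theorem exists_dist_le_of_relInfDist_le {S : Set M} (hS : Bornology.IsBounded S) {κ : ℝ}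
    (hκ : κ < 1) : ∃ R, ∀ p, relInfDist o S p ≤ κ → dist p o ≤ R := by
  obtain ⟨R, hR⟩ := (hS.insert o).subset_closedBall o
  refine ⟨(R + κ) / (1 - κ), fun p hp => ?_⟩
  have hfar : dist p o - R ≤ infDist p (insert o S) :=
    (le_infDist (insert_nonempty o S)).2 fun q hq => by
      linarith [dist_triangle p q o, mem_closedBall.1 (hR hq)]
  rw [relInfDist, div_le_iff₀ (by positivity)] at hp
  rw [le_div_iff₀ (sub_pos.2 hκ)]
  linarith

theorem totallyBounded_of_eventually_relInfDist_le {f : Filter M}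
    (h : ∀ κ > 0, ∃ S : Set M, S.Finite ∧ ∀ᶠ p in f, relInfDist o S p ≤ κ) :
    f.TotallyBounded := by
  refine (Metric.uniformity_basis_dist.filter_totallyBounded_iff).2 fun ε hε => ?_
  obtain ⟨S₁, hS₁, hf₁⟩ := h (1 / 2) one_half_pos
  obtain ⟨R, hR⟩ := exists_dist_le_of_relInfDist_le (o := o) hS₁.isBounded one_half_lt_one
  obtain ⟨S, hS, hf⟩ := h (ε / (2 * (1 + |R|))) (by positivity)
  refine ⟨insert o S, hS.insert o, ?_⟩
  filter_upwards [hf₁, hf] with p hp₁ hp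
  rw [relInfDist, div_le_iff₀ (by positivity)] at hp
  have hlt : infDist p (insert o S) < ε :=
    calc infDist p (insert o S) ≤ ε / (2 * (1 + |R|)) * (1 + dist p o) := hp
      _ ≤ ε / (2 * (1 + |R|)) * (1 + |R|) := by
          gcongr
          exact (hR p hp₁).trans (le_abs_self R)
      _ = ε / 2 := by field_simp
      _ < ε := half_lt_self hε
  obtain ⟨q, hq, hpq⟩ := (infDist_lt_iff (insert_nonempty o S)).1 hlt
  exact ⟨q, hq, hpq⟩

end RelInfDist

open scoped NNReal

variable {M : Type*} [MetricSpace M] {o : M} {F : Type*} [NormedAddCommGroup F]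
  [NormedSpace ℝ F] {δ : M → F}

theorem freeSpan_mono {S S' : Set M} (h : S ⊆ S') : freeSpan δ S ≤ freeSpan δ S' :=
  Submodule.topologicalClosure_mono (Submodule.span_mono (image_mono h))

theorem IsLipschitzFree.mem_freeSpan_setOf_clusterPt_of_tendsto [CompleteSpace M]
    (hδ : IsLipschitzFree o δ) {f : Filter M} (hf : f.TotallyBounded) {ι : Type*} {l : Filter ι}
    [l.NeBot] {x : ι → F} {y : F} (hx : ∀ S ∈ f, ∀ᶠ i in l, x i ∈ freeSpan δ S)
    (hxy : Tendsto x l (𝓝 y)) : y ∈ freeSpan δ {p | ClusterPt p f} := by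
  refine hδ.mem_freeSpan_of_forall_isOpen fun U hU hfU => ?_
  exact (isClosed_freeSpan U).mem_of_tendsto hxy (hx U (mem_of_forall_clusterPt_mem hf hU hfU))

theorem IsLipschitzFree.list_prod_apply_mem_freeSpan (hδ : IsLipschitzFree o δ)
    {U : ℕ → F →L[ℝ] F} {u : ℕ → M → ℝ} (hU : ∀ n p, U n (δ p) = u n p • δ p) (n : ℕ) (x : F) :
    ((List.range n).map U).prod x ∈ freeSpan δ {p | ∀ k < n, u k p ≠ 0} := by
  refine hδ.apply_mem_freeSpan (fun p => ?_) x
  rw [list_prod_apply_of_forall_apply_eq_smul (fun k => hU k p)]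
  by_cases hp : ∀ k < n, u k p ≠ 0
  · exact Submodule.smul_mem _ _ (mem_freeSpan δ hp)
  · push Not at hp
    obtain ⟨k, hk, hkp⟩ := hp
    rw [Finset.prod_eq_zero (Finset.mem_range.2 hk) hkp, zero_smul]
    exact zero_mem _

theorem IsVStarSet.exists_isCompact_approx [CompleteSpace M] [CompleteSpace F]
    (hδ : IsLipschitzFree o δ) {W : Set F} (hW : IsVStarSet W) {ε : ℝ} (hε : 0 < ε) :
    ∃ K : Set M, IsCompact K ∧ ∃ Γ : Set F, IsVStarSet Γ ∧ Γ ⊆ freeSpan δ K ∧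
      ∀ x ∈ W, ∃ y ∈ Γ, ‖x - y‖ ≤ ε := by
  let r : ℕ → ℝ≥0 := fun n => 1 / (n + 1)
  have hr : ∀ n, 0 < r n := fun n => Nat.one_div_pos_of_nat
  obtain ⟨U, hU, t, htU, ht⟩ := exists_tendstoUniformlyOn_list_prod (W := W)
    (𝒰 := fun n => {U | ‖U‖ ≤ ↑(1 + 2 / r n) ∧
      ∃ S : Finset M, ∀ p, U (δ p) = cutoff o (r n) (r n) S p • δ p})
    (fun n U hU => hU.1)
    (fun n η hη => by
      obtain ⟨S, U, hU_norm, hU, hUW⟩ := hW.exists_cutoff_operator hδ (hr n) hη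
      exact ⟨U, ⟨hU_norm, S, hU⟩, hUW⟩) hε
  choose _ S hU using hU
  let V : ℕ → Set M := fun n => {p | ∀ k < n, cutoff o (r k) (r k) (S k) p ≠ 0}
  have hV : Antitone V := fun m n hmn p hp k hk => hp k (hk.trans_le hmn)
  let f : Filter M := ⨅ n, 𝓟 (V n)
  have hf : f.TotallyBounded := by
    refine totallyBounded_of_eventually_relInfDist_le (o := o) fun κ hκ => ?_
    obtain ⟨n, hn⟩ := exists_nat_one_div_lt (half_pos hκ)
    refine ⟨S n, (S n).finite_toSet, ?_⟩
    filter_upwards [mem_iInf_of_mem (n + 1) (mem_principal_self _)] with p hp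
    have := relInfDist_lt_of_cutoff_ne_zero (hr n) (hp n n.lt_succ_self)
    have hrn : (r n : ℝ) = 1 / (n + 1) := by simp [r]
    linarith
  refine ⟨{p | ClusterPt p f}, hf.isCompact_setOfPred_clusterPt, t '' W,
    hW.image_of_tendstoUniformlyOn htU, forall_mem_image.2 fun x hx => ?_,
    fun x hx => ⟨t x, mem_image_of_mem t hx, ht x hx⟩⟩
  refine hδ.mem_freeSpan_setOf_clusterPt_of_tendsto hf (fun A hA => ?_) (htU.tendsto_at hx)
  obtain ⟨n, -, hn⟩ := (hasBasis_iInf_principal hV.directed_ge).mem_iff.1 hA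
  filter_upwards [eventually_ge_atTop n] with m hm
  exact freeSpan_mono ((hV hm).trans hn) (hδ.list_prod_apply_mem_freeSpan hU m x)

theorem extensionOperator_apply {K : Set M} (E : (freeSpan δ K →L[ℝ] ℝ) →L[ℝ] F →L[ℝ] ℝ)
    (hE : ∀ (f : freeSpan δ K →L[ℝ] ℝ) (p : M) (hp : p ∈ K),
      E f (δ p) = f ⟨δ p, mem_freeSpan δ hp⟩) (f : freeSpan δ K →L[ℝ] ℝ) (y : freeSpan δ K) :
    E f y = f y := by
  obtain ⟨g, hg, -⟩ := exists_extension_norm_eq (freeSpan δ K) f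
  rw [← hg]
  refine eqOn_freeSpan (fun p hp => ?_) y.2
  exact (hE f p hp).trans (hg ⟨δ p, mem_freeSpan δ hp⟩).symm

end CompactReduction

/-- Suppose that for every compact `K ⊆ M` containing the base point there exists a
bounded linear extension operator `E : Lip₀(K) → Lip₀(M)` with `E(f)|_K = f` (here
`Lip₀(K)` and `Lip₀(M)` are realized as the duals `F(K)*` and `F(M)*`, a functional `φ`
corresponding to the Lipschitz function `x ↦ ⟨φ, δ(x)⟩`).  Then property (V*) is
compactly determined for `F(M)`: if `F(K ∪ {0})` has property (V*) for every compact
`K ⊆ M`, then `F(M)` has property (V*). -/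
theorem propertyVStar_compactlyDetermined_of_extensionOperator
    {M : Type*} [MetricSpace M] [CompleteSpace M] (o : M)
    {F : Type*} [NormedAddCommGroup F] [NormedSpace ℝ F] [CompleteSpace F]
    (δ : M → F) (hδ : IsLipschitzFree o δ)
    (hext : ∀ K : Set M, IsCompact K → o ∈ K →
      ∃ E : (↥(freeSpan δ K) →L[ℝ] ℝ) →L[ℝ] (F →L[ℝ] ℝ),
        ∀ f : ↥(freeSpan δ K) →L[ℝ] ℝ, ∀ x : M, ∀ hx : x ∈ K,
          E f (δ x) = f ⟨δ x, mem_freeSpan δ hx⟩)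
    (hcpt : ∀ K : Set M, IsCompact K → HasPropertyVStar ↥(freeSpan δ (K ∪ {o}))) :
    HasPropertyVStar F := by
  intro W hW
  refine RelWeaklyCompact.of_approx fun ε hε => ?_
  obtain ⟨K, hK, Γ, hΓ, hΓK, hWΓ⟩ := hW.exists_isCompact_approx hδ hε
  obtain ⟨E, hE⟩ := hext (K ∪ {o}) (hK.union isCompact_singleton) (mem_union_right K rfl)
  have hΓ_pull : IsVStarSet ((↑) ⁻¹' Γ : Set (freeSpan δ (K ∪ {o}))) :=
    hΓ.preimage_of_extensionOperator E (extensionOperator_apply E hE)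
  refine ⟨_, (hcpt K hK _ hΓ_pull).image (freeSpan δ (K ∪ {o})).subtypeL, fun x hx => ?_⟩
  obtain ⟨y, hy, hxy⟩ := hWΓ x hx
  exact ⟨y, ⟨⟨y, freeSpan_mono subset_union_left (hΓK hy)⟩, hy, rfl⟩, hxy⟩
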